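/- There exists a constant C > 0 such that for every integer N ≥ 2, every t ∈ [0,1], and every ρ ∈ ℝ: |(1/N)·log E_N(t,ρ)| ≤ C·(log N)/N. -/

import Mathlib

open Set Filter

noncomputable def GP : ℝ → ℝ := fun x => x * Real.log x + (1 - x) * Real.log (1 - x)

noncomputable def Gt (f0 f1 : ℝ → ℝ) (t : ℝ) : ℝ → ℝ :=
  fun x => GP x + ((1 - t) * f0 x + t * f1 x)

noncomputable def Phase (G : ℝ → ℝ) (α : ℝ) : ℝ → ℝ :=
  fun x => (x - α) * deriv G x - (G x - G α)

noncomputable def Qnorm (G : ℝ → ℝ) (N : ℕ) (α : ℝ) : ℝ :=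
  2 * Real.pi * ∫ x in (0:ℝ)..1, Real.exp (-(N : ℝ) * Phase G α x)

noncomputable def RPhase (G : ℝ → ℝ) (α : ℝ) : ℝ → ℝ :=
  fun y => (1 / α) * Phase G α (α * (1 + y))

noncomputable def Leg (G : ℝ → ℝ) (S : Set ℝ) : ℝ → ℝ :=
  fun ρ => sSup ((fun x => x * ρ - G x) '' S)

noncomputable def QQ (G : ℝ → ℝ) (N : ℕ) (α : ℝ) : ℝ :=
  Qnorm G N α * Real.exp ((N : ℝ) * G α)

noncomputable def Ecal (f0 f1 : ℝ → ℝ) (N : ℕ) (t ρ : ℝ) : ℝ :=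
  ∑ k ∈ Finset.range (N + 1),
    Real.exp ((N:ℝ) * (((k:ℝ)/(N:ℝ)) * ρ - Leg (Gt f0 f1 t) (Set.Icc 0 1) ρ)) /
      ((QQ (Gt f0 f1 0) N ((k:ℝ)/(N:ℝ))) ^ ((1:ℝ) - t) *
        (QQ (Gt f0 f1 1) N ((k:ℝ)/(N:ℝ))) ^ t)

open MeasureTheory

theorem aux_GP_deriv {x : ℝ} (h0 : 0 < x) (h1 : x < 1) :
    HasDerivAt GP (Real.log x - Real.log (1 - x)) x := by
  have hx : x ≠ 0 := h0.ne'
  have hx1 : 1 - x ≠ 0 := by linarith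
  have a1 := (hasDerivAt_id x).mul (Real.hasDerivAt_log hx)
  have b0 : HasDerivAt (fun y : ℝ => 1 - y) (-1) x := by
    simpa using (hasDerivAt_id x).const_sub 1
  have b1 := b0.mul (b0.log hx1)
  have := a1.add b1
  refine (this.congr_deriv ?_).congr_of_eventuallyEq ?_
  · simp only [id]
    field_simp
    ring
  · exact Eventually.of_forall fun y => by simp [GP]

theorem aux_GP_cont : Continuous GP := by
  unfold GP
  have h := Real.continuous_mul_log
  exact h.add (h.comp (continuous_const.sub continuous_id))

theorem aux_mul_log {a x : ℝ} (ha : 0 ≤ a) (hx : 0 < x) :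
    a * Real.log a - a * Real.log x ≤ a * (a / x - 1) := by
  rcases ha.eq_or_lt with rfl | ha
  · simp
  · rw [← mul_sub, ← Real.log_div ha.ne' hx.ne']
    exact mul_le_mul_of_nonneg_left (Real.log_le_sub_one_of_pos (by positivity)) ha.le

theorem aux_lip (f : ℝ → ℝ) (hf : Differentiable ℝ f) (L : ℝ)
    (hL : ∀ x ∈ Icc (0:ℝ) 1, |deriv f x| ≤ L) {x a : ℝ} (hx : x ∈ Icc (0:ℝ) 1)
    (ha : a ∈ Icc (0:ℝ) 1) : |f a - f x| ≤ L * |x - a| := by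
  have := (convex_Icc (0:ℝ) 1).norm_image_sub_le_of_norm_deriv_le (f := f) (C := L)
    (fun y _ => hf y) (fun y hy => by simpa using hL y hy) hx ha
  rw [abs_sub_comm x a]
  simpa using this

theorem aux_phase_le (f : ℝ → ℝ) (hf : Differentiable ℝ f) (L : ℝ)
    (hL : ∀ x ∈ Icc (0:ℝ) 1, |deriv f x| ≤ L) {x a : ℝ} (hx : x ∈ Ioo (0:ℝ) 1)
    (ha : a ∈ Icc (0:ℝ) 1) :
    Phase (fun y => GP y + f y) a x ≤ (x - a) ^ 2 / (x * (1 - x)) + 2 * L * |x - a| := by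
  have hd : deriv (fun y => GP y + f y) x = Real.log x - Real.log (1 - x) + deriv f x :=
    ((aux_GP_deriv hx.1 hx.2).add (hf x).hasDerivAt).deriv
  have h1 := aux_mul_log ha.1 hx.1
  have h2 := aux_mul_log (a := 1 - a) (x := 1 - x) (by linarith [ha.2]) (by linarith [hx.2])
  have h3 := aux_lip f hf L hL (Ioo_subset_Icc_self hx) ha
  have h4 : (x - a) * deriv f x ≤ L * |x - a| := by
    calc (x - a) * deriv f x ≤ |(x - a) * deriv f x| := le_abs_self _
      _ = |deriv f x| * |x - a| := by rw [abs_mul, mul_comm]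
      _ ≤ L * |x - a| := mul_le_mul_of_nonneg_right (hL x (Ioo_subset_Icc_self hx)) (abs_nonneg _)
  have h5 : a * (a / x - 1) + (1 - a) * ((1 - a) / (1 - x) - 1) = (x - a) ^ 2 / (x * (1 - x)) := by
    have := hx.1.ne'
    have : 1 - x ≠ 0 := by linarith [hx.2]
    field_simp
    ring
  have h6 := le_abs_self (f a - f x)
  unfold Phase
  rw [hd, ← h5]
  simp only [GP]
  nlinarith

theorem aux_phase_nonneg (G : ℝ → ℝ) (hc : Continuous G)
    (hdiff : ∀ x ∈ Ioo (0:ℝ) 1, DifferentiableAt ℝ G x)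
    (hG : ∀ x ∈ Ioo (0:ℝ) 1, 0 < iteratedDeriv 2 G x) {x a : ℝ} (hx : x ∈ Ioo (0:ℝ) 1)
    (ha : a ∈ Icc (0:ℝ) 1) : 0 ≤ Phase G a x := by
  have hcv : ConvexOn ℝ (Icc (0:ℝ) 1) G := by
    refine (strictConvexOn_of_deriv2_pos (convex_Icc 0 1) hc.continuousOn ?_).convexOn
    intro y hy
    rw [interior_Icc] at hy
    have := hG y hy
    rwa [iteratedDeriv_eq_iterate] at this
  have hxI := Ioo_subset_Icc_self hx
  unfold Phase
  rcases lt_trichotomy x a with h | h | h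
  · have := hcv.deriv_le_slope hxI ha h (hdiff x hx)
    rw [slope_def_field, le_div_iff₀ (by linarith)] at this
    linarith
  · subst h; simp
  · have := hcv.slope_le_deriv ha hxI h (hdiff x hx)
    rw [slope_def_field, div_le_iff₀ (by linarith)] at this
    linarith

theorem aux_Q_bounds (G : ℝ → ℝ) (hc : Continuous G)
    (N : ℕ) (hN : 2 ≤ N) (K a : ℝ) (ha : a ∈ Icc (0:ℝ) 1)
    (hpos : ∀ x ∈ Ioo (0:ℝ) 1, 0 ≤ Phase G a x)
    (L : ℝ) (hL0 : 0 ≤ L) (hK : K = 4 + 2 * L)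
    (hle : ∀ x ∈ Ioo (0:ℝ) 1,
      Phase G a x ≤ (x - a) ^ 2 / (x * (1 - x)) + 2 * L * |x - a|) :
    Real.exp (-K) / N ≤ Qnorm G N a ∧ Qnorm G N a ≤ 2 * Real.pi := by
  have hNr : (2:ℝ) ≤ N := by exact_mod_cast hN
  have hN0 : (0:ℝ) < N := by linarith
  have hmeas : Measurable (fun x => Real.exp (-(N:ℝ) * Phase G a x)) := by
    have h1 : Measurable (deriv G) := measurable_deriv G
    have h2 : Measurable G := hc.measurable
    unfold Phase
    fun_prop
  have hle1 : ∀ x ∈ Ioo (0:ℝ) 1, Real.exp (-(N:ℝ) * Phase G a x) ≤ 1 := by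
    intro x hx
    rw [Real.exp_le_one_iff]
    nlinarith [hpos x hx]
  have hint : IntegrableOn (fun x => Real.exp (-(N:ℝ) * Phase G a x)) (Ioo (0:ℝ) 1) volume := by
    refine Measure.integrableOn_of_bounded (M := 1) (by simp) hmeas.aestronglyMeasurable ?_
    refine (ae_restrict_iff' measurableSet_Ioo).2 (Eventually.of_forall fun x hx => ?_)
    rw [Real.norm_of_nonneg (Real.exp_pos _).le]
    exact hle1 x hx
  have heq : (∫ x in (0:ℝ)..1, Real.exp (-(N : ℝ) * Phase G a x)) =
      ∫ x in Ioo (0:ℝ) 1, Real.exp (-(N : ℝ) * Phase G a x) := by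
    rw [intervalIntegral.integral_of_le zero_le_one, integral_Ioc_eq_integral_Ioo]
  have hup : (∫ x in Ioo (0:ℝ) 1, Real.exp (-(N : ℝ) * Phase G a x)) ≤ 1 := by
    have := setIntegral_mono_on hint (integrableOn_const (C := (1:ℝ)) (by simp)) measurableSet_Ioo hle1
    simpa using this
  -- a good interval
  have hgood : ∃ p : ℝ, 0 < p ∧ p + 1 / (4 * N) < 1 ∧ ∀ x ∈ Icc p (p + 1 / (4 * N)),
      1 / (4 * N) ≤ x * (1 - x) * 4 ∧ |x - a| ≤ 1 / (2 * N) := by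
    have e : (1:ℝ) / (2 * N) = 2 * (1 / (4 * N)) := by field_simp; norm_num
    rw [e]
    have hd0 : (0:ℝ) < 1 / (4 * N) := by positivity
    have hd1 : (1:ℝ) / (4 * N) ≤ 1 / 8 := by
      apply one_div_le_one_div_of_le <;> linarith
    generalize (1:ℝ) / (4 * N) = d at *
    obtain ⟨ha0, ha1⟩ := ha
    rcases le_total a (1/2) with h | h
    · refine ⟨a + d, by linarith, by linarith, fun x hx => ⟨?_, ?_⟩⟩
      · nlinarith [hx.1, hx.2]
      · rw [abs_le]; constructor <;> linarith [hx.1, hx.2]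
    · refine ⟨a - 2 * d, by linarith, by linarith, fun x hx => ⟨?_, ?_⟩⟩
      · nlinarith [hx.1, hx.2]
      · rw [abs_le]; constructor <;> linarith [hx.1, hx.2]
  obtain ⟨p, hp0, hp1, hp⟩ := hgood
  have hsub : Icc p (p + 1 / (4 * N)) ⊆ Ioo (0:ℝ) 1 := fun x hx =>
    ⟨by linarith [hx.1], by linarith [hx.2]⟩
  have hlow : ∀ x ∈ Icc p (p + 1 / (4 * N)),
      Real.exp (-K) ≤ Real.exp (-(N:ℝ) * Phase G a x) := by
    intro x hx
    obtain ⟨h1, h2⟩ := hp x hx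
    obtain ⟨hx0, hx1⟩ := hsub hx
    have h3 := hle x ⟨hx0, hx1⟩
    have hq : 0 < x * (1 - x) := mul_pos hx0 (by linarith)
    have h4 : (x - a) ^ 2 ≤ (1 / (2 * N)) ^ 2 := by
      rw [← sq_abs]; exact pow_le_pow_left₀ (abs_nonneg _) h2 2
    have h5 : (x - a) ^ 2 / (x * (1 - x)) ≤ 4 / N := by
      rw [div_le_iff₀ hq]
      calc (x - a) ^ 2 ≤ (1 / (2 * N)) ^ 2 := h4
        _ = (1 / (4 * N)) * (1 / N) := by field_simp; norm_num
        _ ≤ (x * (1 - x) * 4) * (1 / N) := by gcongr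
        _ = _ := by ring
    have h6 : 2 * L * |x - a| ≤ 2 * L / N := by
      calc 2 * L * |x - a| ≤ 2 * L * (1 / (2 * N)) := by gcongr
        _ ≤ 2 * L * (1 / N) := by gcongr; linarith
        _ = _ := by ring
    have h7 : Phase G a x ≤ K / N := by
      rw [hK, add_div]; linarith
    rw [le_div_iff₀ hN0] at h7
    apply Real.exp_le_exp.2
    linarith
  have hlo : Real.exp (-K) * (1 / (4 * N)) ≤
      ∫ x in Ioo (0:ℝ) 1, Real.exp (-(N : ℝ) * Phase G a x) := by
    calc Real.exp (-K) * (1 / (4 * N)) = ∫ x in Icc p (p + 1 / (4 * N)), Real.exp (-K) := by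
          have : (0:ℝ) ≤ 1 / (4 * N) := by positivity
          rw [setIntegral_const, Measure.real, Real.volume_Icc, add_sub_cancel_left,
            ENNReal.toReal_ofReal this, smul_eq_mul, mul_comm]
      _ ≤ ∫ x in Icc p (p + 1 / (4 * N)), Real.exp (-(N : ℝ) * Phase G a x) :=
          setIntegral_mono_on (integrableOn_const isCompact_Icc.measure_lt_top.ne) (hint.mono_set hsub)
            measurableSet_Icc hlow
      _ ≤ _ := setIntegral_mono_set hint
          (Eventually.of_forall fun x => (Real.exp_pos _).le) hsub.eventuallyLE
  have hpi := Real.pi_gt_three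
  unfold Qnorm
  rw [heq]
  constructor
  · calc Real.exp (-K) / N = 4 * (Real.exp (-K) * (1 / (4 * N))) := by field_simp
      _ ≤ 2 * Real.pi * (Real.exp (-K) * (1 / (4 * N))) := by gcongr; linarith
      _ ≤ _ := by gcongr
  · nlinarith

theorem aux_lattice (N : ℕ) (hN : 2 ≤ N) {x : ℝ} (hx : x ∈ Ioo (0:ℝ) 1) :
    ∃ k : ℕ, k ≤ N ∧ (x - (k:ℝ) / N) ^ 2 / (x * (1 - x)) ≤ 4 / N ∧ |x - (k:ℝ) / N| ≤ 1 / N := by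
  have hNr : (2:ℝ) ≤ N := by exact_mod_cast hN
  have hN0 : (0:ℝ) < N := by linarith
  obtain ⟨hx0, hx1⟩ := hx
  have hq : 0 < x * (1 - x) := mul_pos hx0 (by linarith)
  have e4 : (4:ℝ) / N = 4 * (1 / N) := by ring
  have hd0 : (0:ℝ) < 1 / N := by positivity
  have hd1 : (1:ℝ) / N ≤ 1 / 2 := one_div_le_one_div_of_le (by norm_num) hNr
  rcases lt_or_ge x (1 / N) with h | h
  · refine ⟨0, by omega, ?_, ?_⟩
    · rw [div_le_iff₀ hq, e4]
      simp only [Nat.cast_zero, zero_div, sub_zero]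
      nlinarith
    · simp only [Nat.cast_zero, zero_div, sub_zero]
      rw [abs_of_pos hx0]; exact h.le
  rcases lt_or_ge (1 - 1 / (N:ℝ)) x with h' | h'
  · refine ⟨N, le_rfl, ?_, ?_⟩
    · rw [div_le_iff₀ hq, e4, div_self hN0.ne']
      have : (1 - x) * (1 - x) ≤ (4 * (1 / N) * x) * (1 - x) := by
        refine mul_le_mul_of_nonneg_right ?_ (by linarith)
        nlinarith [mul_pos hd0 (show 0 < x - 1 / 2 by linarith)]
      nlinarith
    · rw [div_self hN0.ne', abs_sub_comm, abs_of_pos (by linarith)]; linarith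
  · have hf1 := Nat.floor_le (a := N * x) (by positivity)
    have hf2 := Nat.lt_floor_add_one (N * x)
    have habs : |x - (⌊N * x⌋₊:ℝ) / N| ≤ 1 / N := by
      have e : x - (⌊N * x⌋₊:ℝ) / N = (N * x - ⌊N * x⌋₊) / N := by field_simp
      rw [e, abs_div, abs_of_pos hN0, abs_of_nonneg (by linarith)]
      gcongr
      linarith
    refine ⟨⌊N * x⌋₊, ?_, ?_, habs⟩
    · have : (⌊N * x⌋₊:ℝ) ≤ N := by nlinarith
      exact_mod_cast this
    · rw [div_le_iff₀ hq, e4]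
      have h4 : (x - (⌊N * x⌋₊:ℝ) / N) ^ 2 ≤ (1 / N) ^ 2 := by
        rw [← sq_abs]; exact pow_le_pow_left₀ (abs_nonneg _) habs 2
      generalize (1:ℝ) / N = d at *
      have : d / 2 ≤ x * (1 - x) := by nlinarith
      nlinarith

theorem aux_geom {a b m M t : ℝ} (hm : 0 < m) (ha : m ≤ a) (hb : m ≤ b) (ha' : a ≤ M)
    (hb' : b ≤ M) (ht : t ∈ Icc (0:ℝ) 1) :
    m ≤ a ^ (1 - t) * b ^ t ∧ a ^ (1 - t) * b ^ t ≤ M := by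
  have key : ∀ c : ℝ, 0 < c → c ^ (1 - t) * c ^ t = c := fun c hc => by
    rw [← Real.rpow_add hc]; simp
  have h1 : 0 ≤ 1 - t := by linarith [ht.2]
  have h2 := ht.1
  have ha0 : 0 < a := by linarith
  have hb0 : 0 < b := by linarith
  constructor
  · rw [← key m hm]
    conv_lhs => rw [key m hm]
    rw [← key m hm]
    gcongr
  · have hM : 0 < M := by linarith
    rw [← key M hM]
    gcongr

theorem aux_leg (f : ℝ → ℝ) (hf : Differentiable ℝ f) (L : ℝ) (hL0 : 0 ≤ L)
    (hL : ∀ x ∈ Icc (0:ℝ) 1, |deriv f x| ≤ L) (N : ℕ) (hN : 2 ≤ N) (ρ : ℝ) :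
    (∀ a ∈ Icc (0:ℝ) 1, a * ρ - (GP a + f a) ≤ Leg (fun y => GP y + f y) (Icc 0 1) ρ) ∧
    ∃ k : ℕ, k ≤ N ∧ Leg (fun y => GP y + f y) (Icc 0 1) ρ
      - ((k:ℝ) / N * ρ - (GP ((k:ℝ) / N) + f ((k:ℝ) / N))) ≤ (4 + 2 * L) / N := by
  have hNr : (2:ℝ) ≤ N := by exact_mod_cast hN
  have hN0 : (0:ℝ) < N := by linarith
  have hc : Continuous (fun x => x * ρ - (GP x + f x)) := by
    have := aux_GP_cont
    have := hf.continuous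
    fun_prop
  obtain ⟨x, hx, hmax⟩ := isCompact_Icc.exists_isMaxOn
    (nonempty_Icc.2 (zero_le_one (α := ℝ))) hc.continuousOn
  have hLeg : Leg (fun y => GP y + f y) (Icc 0 1) ρ = x * ρ - (GP x + f x) := by
    unfold Leg
    refine IsGreatest.csSup_eq ⟨⟨x, hx, rfl⟩, ?_⟩
    rintro _ ⟨y, hy, rfl⟩
    exact hmax hy
  rw [hLeg]
  refine ⟨fun a ha => hmax ha, ?_⟩
  have hKpos : 0 ≤ (4 + 2 * L) / N := by positivity
  rcases hx.1.eq_or_lt with h | h0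
  · refine ⟨0, by omega, ?_⟩
    rw [← h]; simpa using hKpos
  rcases hx.2.eq_or_lt with h | h1
  · refine ⟨N, le_rfl, ?_⟩
    rw [div_self hN0.ne', h]; simpa using hKpos
  obtain ⟨k, hk, hk1, hk2⟩ := aux_lattice N hN ⟨h0, h1⟩
  refine ⟨k, hk, ?_⟩
  have hdG : HasDerivAt (fun y => GP y + f y) (Real.log x - Real.log (1 - x) + deriv f x) x :=
    (aux_GP_deriv h0 h1).add (hf x).hasDerivAt
  have hloc : IsLocalMax (fun x => x * ρ - (GP x + f x)) x :=
    hmax.isLocalMax (Icc_mem_nhds h0 h1)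
  have hd : HasDerivAt (fun x => x * ρ - (GP x + f x))
      (1 * ρ - (Real.log x - Real.log (1 - x) + deriv f x)) x :=
    ((hasDerivAt_id x).mul_const ρ).sub hdG
  have hz := hloc.hasDerivAt_eq_zero hd
  have hkI : (k:ℝ) / N ∈ Icc (0:ℝ) 1 :=
    ⟨by positivity, by rw [div_le_one hN0]; exact_mod_cast hk⟩
  have hP := aux_phase_le f hf L hL ⟨h0, h1⟩ hkI
  unfold Phase at hP
  rw [hdG.deriv, show Real.log x - Real.log (1 - x) + deriv f x = ρ by linarith] at hP
  have h6 : 2 * L * |x - (k:ℝ) / N| ≤ 2 * L * (1 / N) := by gcongr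
  rw [add_div]
  have : 2 * L * (1 / N) = 2 * L / N := by ring
  simp only at hP
  linarith

theorem bergman_cp1_C0_convergence
    (f0 f1 : ℝ → ℝ) (hf0 : ContDiff ℝ (⊤ : ℕ∞) f0) (hf1 : ContDiff ℝ (⊤ : ℕ∞) f1)
    (hG0 : ∀ x ∈ Set.Ioo (0:ℝ) 1, 0 < iteratedDeriv 2 (Gt f0 f1 0) x)
    (hG1 : ∀ x ∈ Set.Ioo (0:ℝ) 1, 0 < iteratedDeriv 2 (Gt f0 f1 1) x) :
    ∃ C : ℝ, 0 < C ∧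
      ∀ N : ℕ, 2 ≤ N → ∀ t ∈ Set.Icc (0:ℝ) 1, ∀ ρ : ℝ,
        |(1 / (N:ℝ)) * Real.log (Ecal f0 f1 N t ρ)| ≤ C * Real.log (N:ℝ) / (N:ℝ) := by
  have hd0 : Differentiable ℝ f0 := hf0.differentiable (by simp)
  have hd1 : Differentiable ℝ f1 := hf1.differentiable (by simp)
  have hc0 : Continuous (deriv f0) := hf0.continuous_deriv (by simp)
  have hc1 : Continuous (deriv f1) := hf1.continuous_deriv (by simp)
  obtain ⟨L0, hL0⟩ := isCompact_Icc.exists_bound_of_continuousOn (s := Icc (0:ℝ) 1) hc0.continuousOn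
  obtain ⟨L1, hL1⟩ := isCompact_Icc.exists_bound_of_continuousOn (s := Icc (0:ℝ) 1) hc1.continuousOn
  obtain ⟨L, hLn, hLa, hLb⟩ : ∃ L : ℝ, 0 ≤ L ∧ L0 ≤ L ∧ L1 ≤ L :=
    ⟨max 0 (max L0 L1), by simp, by simp, by simp⟩
  have hft : ∀ t : ℝ, Differentiable ℝ (fun x => (1 - t) * f0 x + t * f1 x) := fun t => by fun_prop
  have hLt : ∀ t ∈ Icc (0:ℝ) 1, ∀ x ∈ Icc (0:ℝ) 1,
      |deriv (fun x => (1 - t) * f0 x + t * f1 x) x| ≤ L := by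
    intro t ht x hx
    have : deriv (fun x => (1 - t) * f0 x + t * f1 x) x = (1 - t) * deriv f0 x + t * deriv f1 x :=
      (((hd0 x).hasDerivAt.const_mul (1 - t)).add ((hd1 x).hasDerivAt.const_mul t)).deriv
    rw [this]
    have a0 := (hL0 x hx).trans hLa
    have a1 := (hL1 x hx).trans hLb
    rw [Real.norm_eq_abs, abs_le] at a0 a1
    obtain ⟨t0, t1⟩ := ht
    rw [abs_le]
    constructor <;> nlinarith
  have hcont : ∀ t : ℝ, Continuous (Gt f0 f1 t) := fun t =>
    aux_GP_cont.add (hft t).continuous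
  have hdiff : ∀ t : ℝ, ∀ x ∈ Ioo (0:ℝ) 1, DifferentiableAt ℝ (Gt f0 f1 t) x := fun t x hx =>
    ((aux_GP_deriv hx.1 hx.2).differentiableAt).add (hft t x)
  have hQ0 : ∀ N : ℕ, 2 ≤ N → ∀ a ∈ Icc (0:ℝ) 1,
      Real.exp (-(4 + 2 * L)) / N ≤ Qnorm (Gt f0 f1 0) N a ∧
        Qnorm (Gt f0 f1 0) N a ≤ 2 * Real.pi := fun N hN a ha =>
    aux_Q_bounds _ (hcont 0) N hN _ a ha
      (fun x hx => aux_phase_nonneg _ (hcont 0) (hdiff 0) hG0 hx ha) L hLn rfl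
      (fun x hx => aux_phase_le _ (hft 0) L (hLt 0 (by simp)) hx ha)
  have hQ1 : ∀ N : ℕ, 2 ≤ N → ∀ a ∈ Icc (0:ℝ) 1,
      Real.exp (-(4 + 2 * L)) / N ≤ Qnorm (Gt f0 f1 1) N a ∧
        Qnorm (Gt f0 f1 1) N a ≤ 2 * Real.pi := fun N hN a ha =>
    aux_Q_bounds _ (hcont 1) N hN _ a ha
      (fun x hx => aux_phase_nonneg _ (hcont 1) (hdiff 1) hG1 hx ha) L hLn rfl
      (fun x hx => aux_phase_le _ (hft 1) L (hLt 1 (by simp)) hx ha)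
  have hlog2 : 0 < Real.log 2 := Real.log_pos (by norm_num)
  have hpi := Real.pi_pos
  refine ⟨(5 + 2 * L + 2 * Real.pi) / Real.log 2 + 2, by positivity, ?_⟩
  intro N hN t ht ρ
  have hNr : (2:ℝ) ≤ N := by exact_mod_cast hN
  have hN0 : (0:ℝ) < N := by linarith
  obtain ⟨hleg1, k0, hk0, hleg2⟩ := aux_leg _ (hft t) L hLn (hLt t ht) N hN ρ
  change ∀ a ∈ Icc (0:ℝ) 1, a * ρ - Gt f0 f1 t a ≤ Leg (Gt f0 f1 t) (Icc 0 1) ρ at hleg1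
  change Leg (Gt f0 f1 t) (Icc 0 1) ρ - ((k0:ℝ) / N * ρ - Gt f0 f1 t ((k0:ℝ) / N))
    ≤ (4 + 2 * L) / N at hleg2
  have hI : ∀ k : ℕ, k ≤ N → (k:ℝ) / N ∈ Icc (0:ℝ) 1 := fun k hk =>
    ⟨by positivity, by rw [div_le_one hN0]; exact_mod_cast hk⟩
  have hterm : ∀ k : ℕ, k ≤ N →
      Real.exp ((N:ℝ) * (((k:ℝ)/(N:ℝ)) * ρ - Leg (Gt f0 f1 t) (Set.Icc 0 1) ρ)) /
      ((QQ (Gt f0 f1 0) N ((k:ℝ)/(N:ℝ))) ^ ((1:ℝ) - t) *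
        (QQ (Gt f0 f1 1) N ((k:ℝ)/(N:ℝ))) ^ t) =
      Real.exp (-(N:ℝ) * (Leg (Gt f0 f1 t) (Set.Icc 0 1) ρ -
        ((k:ℝ)/(N:ℝ) * ρ - Gt f0 f1 t ((k:ℝ)/(N:ℝ))))) /
      ((Qnorm (Gt f0 f1 0) N ((k:ℝ)/(N:ℝ))) ^ ((1:ℝ) - t) *
        (Qnorm (Gt f0 f1 1) N ((k:ℝ)/(N:ℝ))) ^ t) := by
    intro k hk
    have p : 0 < Real.exp (-(4 + 2 * L)) / N := by positivity
    have q0 : 0 < Qnorm (Gt f0 f1 0) N ((k:ℝ)/(N:ℝ)) := p.trans_le (hQ0 N hN _ (hI k hk)).1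
    have q1 : 0 < Qnorm (Gt f0 f1 1) N ((k:ℝ)/(N:ℝ)) := p.trans_le (hQ1 N hN _ (hI k hk)).1
    unfold QQ
    rw [Real.mul_rpow q0.le (Real.exp_pos _).le, Real.mul_rpow q1.le (Real.exp_pos _).le,
      ← Real.exp_mul, ← Real.exp_mul, mul_mul_mul_comm, ← Real.exp_add, mul_comm (_ ^ _ * _ ^ _) (Real.exp _),
      ← div_div, ← Real.exp_sub]
    congr 2
    simp only [Gt]
    ring
  have hupper : ∀ k : ℕ, k ≤ N →
      Real.exp (-(N:ℝ) * (Leg (Gt f0 f1 t) (Set.Icc 0 1) ρ -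
        ((k:ℝ)/(N:ℝ) * ρ - Gt f0 f1 t ((k:ℝ)/(N:ℝ))))) /
      ((Qnorm (Gt f0 f1 0) N ((k:ℝ)/(N:ℝ))) ^ ((1:ℝ) - t) *
        (Qnorm (Gt f0 f1 1) N ((k:ℝ)/(N:ℝ))) ^ t) ≤ N * Real.exp (4 + 2 * L) := by
    intro k hk
    have p : 0 < Real.exp (-(4 + 2 * L)) / N := by positivity
    obtain ⟨g1, g2⟩ := aux_geom p (hQ0 N hN _ (hI k hk)).1 (hQ1 N hN _ (hI k hk)).1
      (hQ0 N hN _ (hI k hk)).2 (hQ1 N hN _ (hI k hk)).2 ht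
    have : N * Real.exp (4 + 2 * L) = 1 / (Real.exp (-(4 + 2 * L)) / N) := by
      rw [Real.exp_neg]; field_simp
    rw [this]
    have h1 := hleg1 _ (hI k hk)
    have h2 : Real.exp (-(N:ℝ) * (Leg (Gt f0 f1 t) (Set.Icc 0 1) ρ -
        ((k:ℝ)/(N:ℝ) * ρ - Gt f0 f1 t ((k:ℝ)/(N:ℝ))))) ≤ 1 := by
      rw [Real.exp_le_one_iff]
      nlinarith
    exact div_le_div₀ zero_le_one h2 p g1
  have hlower : Real.exp (-(4 + 2 * L)) / (2 * Real.pi) ≤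
      Real.exp (-(N:ℝ) * (Leg (Gt f0 f1 t) (Set.Icc 0 1) ρ -
        ((k0:ℝ)/(N:ℝ) * ρ - Gt f0 f1 t ((k0:ℝ)/(N:ℝ))))) /
      ((Qnorm (Gt f0 f1 0) N ((k0:ℝ)/(N:ℝ))) ^ ((1:ℝ) - t) *
        (Qnorm (Gt f0 f1 1) N ((k0:ℝ)/(N:ℝ))) ^ t) := by
    have p : 0 < Real.exp (-(4 + 2 * L)) / N := by positivity
    obtain ⟨g1, g2⟩ := aux_geom p (hQ0 N hN _ (hI k0 hk0)).1 (hQ1 N hN _ (hI k0 hk0)).1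
      (hQ0 N hN _ (hI k0 hk0)).2 (hQ1 N hN _ (hI k0 hk0)).2 ht
    refine div_le_div₀ (Real.exp_pos _).le ?_ (p.trans_le g1) g2
    apply Real.exp_le_exp.2
    rw [le_div_iff₀ hN0] at hleg2
    linarith
  have hnn : ∀ k : ℕ, k ≤ N → 0 ≤
      Real.exp (-(N:ℝ) * (Leg (Gt f0 f1 t) (Set.Icc 0 1) ρ -
        ((k:ℝ)/(N:ℝ) * ρ - Gt f0 f1 t ((k:ℝ)/(N:ℝ))))) /
      ((Qnorm (Gt f0 f1 0) N ((k:ℝ)/(N:ℝ))) ^ ((1:ℝ) - t) *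
        (Qnorm (Gt f0 f1 1) N ((k:ℝ)/(N:ℝ))) ^ t) := by
    intro k hk
    have p : 0 < Real.exp (-(4 + 2 * L)) / N := by positivity
    obtain ⟨g1, g2⟩ := aux_geom p (hQ0 N hN _ (hI k hk)).1 (hQ1 N hN _ (hI k hk)).1
      (hQ0 N hN _ (hI k hk)).2 (hQ1 N hN _ (hI k hk)).2 ht
    exact div_nonneg (Real.exp_pos _).le (p.le.trans g1)
  have hmem : ∀ k ∈ Finset.range (N + 1), k ≤ N := fun k hk => by
    simpa [Nat.lt_succ_iff] using hk
  have hE := Finset.sum_congr (rfl : Finset.range (N + 1) = _) (fun k hk => hterm k (hmem k hk))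
  have hElow : Real.exp (-(4 + 2 * L)) / (2 * Real.pi) ≤ Ecal f0 f1 N t ρ := by
    unfold Ecal
    rw [hE]
    exact hlower.trans (Finset.single_le_sum (f := fun k : ℕ =>
      Real.exp (-(N:ℝ) * (Leg (Gt f0 f1 t) (Set.Icc 0 1) ρ -
        ((k:ℝ)/(N:ℝ) * ρ - Gt f0 f1 t ((k:ℝ)/(N:ℝ))))) /
      ((Qnorm (Gt f0 f1 0) N ((k:ℝ)/(N:ℝ))) ^ ((1:ℝ) - t) *
        (Qnorm (Gt f0 f1 1) N ((k:ℝ)/(N:ℝ))) ^ t)) (fun k hk => hnn k (hmem k hk))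
      (Finset.mem_range.2 (Nat.lt_succ_of_le hk0)))
  have hEup : Ecal f0 f1 N t ρ ≤ (N + 1) * (N * Real.exp (4 + 2 * L)) := by
    unfold Ecal
    rw [hE]
    refine (Finset.sum_le_card_nsmul _ _ _ (fun k hk => hupper k (hmem k hk))).trans ?_
    simp
  have hl1 : Real.log (Ecal f0 f1 N t ρ) ≥ -(5 + 2 * L + 2 * Real.pi) := by
    have hpe : 2 * Real.pi ≤ Real.exp (2 * Real.pi) := by
      linarith [Real.add_one_le_exp (2 * Real.pi)]
    have := Real.log_le_log (by positivity) hElow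
    rw [Real.log_div (Real.exp_pos _).ne' (by positivity), Real.log_exp] at this
    have h2 := Real.log_le_sub_one_of_pos (show 0 < 2 * Real.pi by positivity)
    linarith
  have hl2 : Real.log (Ecal f0 f1 N t ρ) ≤ (5 + 2 * L + 2 * Real.pi) + 2 * Real.log N := by
    have hEpos : 0 < Ecal f0 f1 N t ρ := lt_of_lt_of_le (by positivity) hElow
    have := Real.log_le_log hEpos hEup
    rw [Real.log_mul (by positivity) (by positivity), Real.log_mul (by positivity) (by positivity),
      Real.log_exp] at this
    have h3 : Real.log ((N:ℝ) + 1) ≤ Real.log N + 1 := by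
      have a := Real.log_le_log (by positivity) (show (N:ℝ) + 1 ≤ N * 2 by linarith)
      rw [Real.log_mul hN0.ne' (by norm_num)] at a
      have := Real.log_le_sub_one_of_pos (show (0:ℝ) < 2 by norm_num)
      linarith
    linarith
  have hlN : Real.log 2 ≤ Real.log N := Real.log_le_log (by norm_num) hNr
  have hfin : |Real.log (Ecal f0 f1 N t ρ)| ≤
      ((5 + 2 * L + 2 * Real.pi) / Real.log 2 + 2) * Real.log N := by
    have : 5 + 2 * L + 2 * Real.pi ≤ (5 + 2 * L + 2 * Real.pi) / Real.log 2 * Real.log N := by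
      rw [div_mul_eq_mul_div, le_div_iff₀ hlog2]
      gcongr
    rw [abs_le]
    constructor <;> linarith
  rw [abs_mul, abs_of_pos (by positivity : (0:ℝ) < 1 / N), one_div, inv_mul_eq_div]
  gcongr
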